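/- Let A be a unital complex Banach algebra and let e ∈ A be invertible with ‖e‖ ≤ 1 (so A_e is unital). If A_e is approximately biprojective — i.e. there exists a net of continuous linear maps σ_i : A → A⊗A such that for all a, b ∈ A: (a·e)·σ_i(b) − σ_i(a·e·b) → 0 and σ_i(a·e·b) − σ_i(a)·(e·b) → 0 in A⊗A, and π_e(σ_i(a)) → a in A, where π_e(x⊗y) = x·e·y — then A is approximately biprojective: there exists a net of continuous linear maps ρ_i : A → A⊗A such that for all a, b ∈ A: a·ρ_i(b) − ρ_i(ab) → 0 and ρ_i(ba) − ρ_i(b)·a → 0 in A⊗A, and π_A(ρ_i(a)) → a in A. -/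

import Mathlib

open Filter Topology TensorProduct

/-- The projective tensor seminorm on the algebraic tensor product `A ⊗[ℂ] A`:
the infimum of `∑ ‖xᵢ‖‖yᵢ‖` over all representations `z = ∑ xᵢ ⊗ yᵢ`. -/
noncomputable def projSN {A : Type*} [NormedRing A] [NormedAlgebra ℂ A]
    (z : TensorProduct ℂ A A) : ℝ :=
  sInf {r : ℝ | ∃ (n : ℕ) (x y : Fin n → A),
    z = ∑ i, x i ⊗ₜ[ℂ] y i ∧ r = ∑ i, ‖x i‖ * ‖y i‖}

theorem projSN_nonneg' {A : Type*} [NormedRing A] [NormedAlgebra ℂ A]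
    (z : TensorProduct ℂ A A) : 0 ≤ projSN z := by
  apply Real.sInf_nonneg
  rintro r ⟨n, x, y, -, rfl⟩
  positivity

theorem projSN_set_nonempty {A : Type*} [NormedRing A] [NormedAlgebra ℂ A]
    (z : TensorProduct ℂ A A) : ∃ (n : ℕ) (x y : Fin n → A), z = ∑ i, x i ⊗ₜ[ℂ] y i := by
  induction z using TensorProduct.induction_on with
  | zero => exact ⟨0, Fin.elim0, Fin.elim0, by simp⟩
  | tmul x y => exact ⟨1, fun _ => x, fun _ => y, by simp⟩
  | add a b ha hb =>
    obtain ⟨n, x, y, rfl⟩ := ha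
    obtain ⟨m, u, v, rfl⟩ := hb
    exact ⟨n + m, Fin.append x u, Fin.append y v, by simp [Fin.sum_univ_add]⟩

theorem projSN_lTensor_le {A : Type*} [NormedRing A] [NormedAlgebra ℂ A]
    (e : A) (he : ‖e‖ ≤ 1) (z : TensorProduct ℂ A A) :
    projSN (LinearMap.lTensor A (LinearMap.mulLeft ℂ e) z) ≤ projSN z := by
  obtain ⟨n, x, y, h⟩ := projSN_set_nonempty z
  refine le_csInf ⟨_, n, x, y, h, rfl⟩ ?_
  rintro r ⟨n, x, y, rfl, rfl⟩
  have hb : BddBelow {r : ℝ | ∃ (m : ℕ) (u v : Fin m → A),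
      LinearMap.lTensor A (LinearMap.mulLeft ℂ e) (∑ i, x i ⊗ₜ[ℂ] y i) = ∑ i, u i ⊗ₜ[ℂ] v i ∧
        r = ∑ i, ‖u i‖ * ‖v i‖} := by
    refine ⟨0, ?_⟩
    rintro r ⟨n, x, y, -, rfl⟩
    positivity
  refine (csInf_le hb ⟨n, x, fun i => e * y i, by simp [map_sum], rfl⟩).trans ?_
  refine Finset.sum_le_sum fun i _ => ?_
  refine mul_le_mul_of_nonneg_left ?_ (norm_nonneg _)
  exact (norm_mul_le _ _).trans (mul_le_of_le_one_left (norm_nonneg _) he)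

/-- Let `A` be a unital complex Banach algebra and `e ∈ A`
invertible (with inverse `f`) with `‖e‖ ≤ 1`.  If `A_e` is approximately
biprojective (a net of continuous linear maps `σᵢ : A → A ⊗ A` with
`(a*e)·σᵢ(b) − σᵢ(a*e*b) → 0`, `σᵢ(a*e*b) − σᵢ(a)·(e*b) → 0` in the projective
tensor seminorm and `π_e(σᵢ(a)) → a`, `π_e (x ⊗ y) = x*e*y`), then `A` is
approximately biprojective.
(Continuity of a linear map into `A ⊗ A` is expressed as boundedness for the
projective seminorm.) -/
theorem stmt11 {A : Type*} [NormedRing A] [NormedAlgebra ℂ A] [CompleteSpace A]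
    (e f : A) (he : ‖e‖ ≤ 1) (hef : e * f = 1) (hfe : f * e = 1)
    (hAe : ∃ (ι : Type) (l : Filter ι), l.NeBot ∧
      ∃ σ : ι → (A →ₗ[ℂ] TensorProduct ℂ A A),
        (∀ i, ∃ C : ℝ, ∀ a : A, projSN (σ i a) ≤ C * ‖a‖) ∧
        (∀ a b : A, Tendsto
          (fun i => projSN (LinearMap.rTensor A (LinearMap.mulLeft ℂ (a * e)) (σ i b) -
            σ i (a * e * b))) l (𝓝 0)) ∧
        (∀ a b : A, Tendsto
          (fun i => projSN (σ i (a * e * b) -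
            LinearMap.lTensor A (LinearMap.mulRight ℂ (e * b)) (σ i a))) l (𝓝 0)) ∧
        (∀ a : A, Tendsto
          (fun i => ‖LinearMap.mul' ℂ A
            (LinearMap.lTensor A (LinearMap.mulLeft ℂ e) (σ i a)) - a‖) l (𝓝 0))) :
    ∃ (ι : Type) (l : Filter ι), l.NeBot ∧
      ∃ ρ : ι → (A →ₗ[ℂ] TensorProduct ℂ A A),
        (∀ i, ∃ C : ℝ, ∀ a : A, projSN (ρ i a) ≤ C * ‖a‖) ∧
        (∀ a b : A, Tendsto
          (fun i => projSN (LinearMap.rTensor A (LinearMap.mulLeft ℂ a) (ρ i b) -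
            ρ i (a * b))) l (𝓝 0)) ∧
        (∀ a b : A, Tendsto
          (fun i => projSN (ρ i (b * a) -
            LinearMap.lTensor A (LinearMap.mulRight ℂ a) (ρ i b))) l (𝓝 0)) ∧
        (∀ a : A, Tendsto
          (fun i => ‖LinearMap.mul' ℂ A (ρ i a) - a‖) l (𝓝 0)) := by
  obtain ⟨ι, l, hl, σ, hC, h1, h2, h3⟩ := hAe
  refine ⟨ι, l, hl, fun i => (LinearMap.lTensor A (LinearMap.mulLeft ℂ e)).comp (σ i),
    ?_, ?_, ?_, h3⟩
  · intro i
    obtain ⟨C, hC⟩ := hC i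
    exact ⟨C, fun a => (projSN_lTensor_le e he _).trans (hC a)⟩
  · intro a b
    have h := h1 (a * f) b
    rw [mul_assoc a f e, hfe, mul_one] at h
    refine squeeze_zero (fun i => projSN_nonneg' _) (fun i => ?_) h
    refine le_trans (le_of_eq ?_) (projSN_lTensor_le e he _)
    rw [map_sub]
    congr 2
    simp only [LinearMap.comp_apply]
    generalize σ i b = z
    induction z using TensorProduct.induction_on with
    | zero => simp
    | tmul x y => simp [mul_assoc]
    | add x y hx hy => simp only [map_add, hx, hy]
  · intro a b
    have h := h2 b (f * a)
    rw [mul_assoc b e, ← mul_assoc e f a, hef, one_mul] at h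
    refine squeeze_zero (fun i => projSN_nonneg' _) (fun i => ?_) h
    refine le_trans (le_of_eq ?_) (projSN_lTensor_le e he _)
    rw [map_sub]
    congr 2
    simp only [LinearMap.comp_apply]
    generalize σ i b = z
    induction z using TensorProduct.induction_on with
    | zero => simp
    | tmul x y => simp [mul_assoc]
    | add x y hx hy => simp only [map_add, hx, hy]
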